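/- Let R be a self-relation on a finite set X with Dom R = X, with eventual period R^j = R^{j+p} (j, p ≥ 1), such that the graph G_R is connected (EqvGen R relates any two points of X), and such that some positive power of R is acyclic (as holds for every simple relation): there exists q ≥ 1 with R^q acyclic. Then there exists r ≥ 1 such that the number of connected components of K_{R^j} equals the number of connected components of the graph G_{R^r}: for all x, x' ∈ X, ReflTransGen E x x' holds if and only if EqvGen (R^r) x x' holds, where E is the edge relation of K_{R^j} given by E a b ↔ ∃ y, R^j a y ∧ R^j b y. -/

import Mathlib

/-- The Dowker complex `K_R` of a relation `R : X → Y → Prop`: the set of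
nonempty finite subsets `σ ⊆ X` such that there is a `y` with `R x y` for all `x ∈ σ`. -/
def dowkerK {X Y : Type*} (R : X → Y → Prop) : Set (Finset X) :=
  {σ | σ.Nonempty ∧ ∃ y, ∀ x ∈ σ, R x y}

/-- The Dowker complex `L_R` of a relation `R : X → Y → Prop`: the set of
nonempty finite subsets `τ ⊆ Y` such that there is an `x` with `R x y` for all `y ∈ τ`. -/
def dowkerL {X Y : Type*} (R : X → Y → Prop) : Set (Finset Y) :=
  {τ | τ.Nonempty ∧ ∃ x, ∀ y ∈ τ, R x y}

/-- Composition of relations: `relComp R₁ R₂` is the paper's `R₂ ∘ R₁`,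
i.e. `(R₂ ∘ R₁) x z ↔ ∃ y, R₁ x y ∧ R₂ y z`. -/
def relComp {X Y Z : Type*} (R₁ : X → Y → Prop) (R₂ : Y → Z → Prop) : X → Z → Prop :=
  fun x z => ∃ y, R₁ x y ∧ R₂ y z

/-- Powers of a self-relation: `R^0` is equality and `R^(n+1) = R ∘ R^n`. -/
def relPow {X : Type*} (R : X → X → Prop) : ℕ → X → X → Prop
  | 0 => Eq
  | n + 1 => relComp (relPow R n) R

/-
The edge relation of `K_S` is `Relation.Join S`. If `r` is a multiple of the period `p`, with
`j ≤ r`, then going along `R^r` and then along `R^j` is the same as going along `R^j` alone. Hence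
an edge `a → b` of `R^r` gives `a` every `R^j`-image of `b`, and totality provides one. Conversely,
a common `R^j`-image of `a` and `b` extends by totality to a common `R^r`-image.
-/

open Relation Relator

theorem leftTotal_relComp {X Y Z : Type*} {S : X → Y → Prop} {T : Y → Z → Prop}
    (hS : LeftTotal S) (hT : LeftTotal T) : LeftTotal (relComp S T) := fun x =>
  let ⟨y, hxy⟩ := hS x
  let ⟨z, hyz⟩ := hT y
  ⟨z, y, hxy, hyz⟩

section Join

variable {X : Type*} {S T : X → X → Prop}

theorem join_le_join_relComp (hT : LeftTotal T) : Join S ≤ Join (relComp S T) := by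
  rintro a b ⟨y, hay, hby⟩
  obtain ⟨z, hyz⟩ := hT y
  exact ⟨z, ⟨y, hay, hyz⟩, ⟨y, hby, hyz⟩⟩

theorem join_le_eqvGen : Join S ≤ EqvGen S := fun _ _ ⟨_, hac, hbc⟩ =>
  .trans _ _ _ (.rel _ _ hac) (.symm _ _ (.rel _ _ hbc))

theorem le_join_of_relComp_le (hS : LeftTotal S) (hTS : relComp T S ≤ S) : T ≤ Join S := by
  intro a b hab
  obtain ⟨y, hby⟩ := hS b
  exact ⟨y, hTS a y ⟨b, hab, hby⟩, hby⟩

theorem reflTransGen_join_eq_eqvGen_relComp (hS : LeftTotal S) (hT : LeftTotal T)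
    (hSTS : relComp (relComp S T) S ≤ S) :
    ReflTransGen (Join S) = EqvGen (relComp S T) := by
  rw [← EqvGen.eqvGen_eq_reflTransGen]
  apply le_antisymm
  · exact EqvGen.eqvGen_le ((join_le_join_relComp hT).trans join_le_eqvGen)
  · exact EqvGen.mono (le_join_of_relComp_le hS hSTS)

end Join

section Powers

variable {X : Type*} {R : X → X → Prop}

variable (R) in
theorem relPow_add (m n : ℕ) :
    relPow R (m + n) = relComp (relPow R m) (relPow R n) := by
  induction n with
  | zero => exact comp_eq.symm
  | succ n ih =>
    calc relComp (relPow R (m + n)) R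
        = relComp (relComp (relPow R m) (relPow R n)) R := by rw [ih]
      _ = relComp (relPow R m) (relComp (relPow R n) R) := comp_assoc

theorem leftTotal_relPow (hR : LeftTotal R) : ∀ n, LeftTotal (relPow R n)
  | 0 => fun x => ⟨x, rfl⟩
  | n + 1 => leftTotal_relComp (leftTotal_relPow hR n) hR

theorem periodic_relPow_add {j p : ℕ} (hper : relPow R j = relPow R (j + p)) :
    Function.Periodic (fun n => relPow R (j + n)) p := by
  intro n
  calc relPow R (j + (n + p)) = relPow R (j + p + n) := by rw [add_right_comm, add_assoc]
    _ = relPow R (j + n) := by rw [relPow_add, ← hper, ← relPow_add]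

theorem relPow_add_of_dvd {j p r : ℕ} (hper : relPow R j = relPow R (j + p)) (hpr : p ∣ r) :
    relPow R (j + r) = relPow R j := by
  obtain ⟨k, rfl⟩ := hpr
  rw [mul_comm]
  exact (periodic_relPow_add hper).nat_mul_eq k

end Powers

theorem stmt13_general {X : Type*} {R : X → X → Prop} (hDom : LeftTotal R) {j p r : ℕ}
    (hper : relPow R j = relPow R (j + p)) (hjr : j ≤ r) (hpr : p ∣ r) (x x' : X) :
    ReflTransGen (Join (relPow R j)) x x' ↔ EqvGen (relPow R r) x x' := by
  obtain ⟨k, rfl⟩ := Nat.exists_eq_add_of_le hjr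
  have habsorb : relComp (relComp (relPow R j) (relPow R k)) (relPow R j) = relPow R j := by
    rw [← relPow_add, ← relPow_add, add_comm, relPow_add_of_dvd hper hpr]
  rw [relPow_add, reflTransGen_join_eq_eqvGen_relComp (leftTotal_relPow hDom j)
    (leftTotal_relPow hDom k) habsorb.le]

theorem stmt13 {X : Type*} [Fintype X] (R : X → X → Prop)
    (hDom : ∀ x, ∃ y, R x y)
    (j p : ℕ) (hj : 1 ≤ j) (hp : 1 ≤ p)
    (hper : relPow R j = relPow R (j + p))
    (hconn : ∀ x x' : X, Relation.EqvGen R x x')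
    (hsimple : ∃ q : ℕ, 1 ≤ q ∧
      ∀ x y, ∀ m n : ℕ, 1 ≤ m → 1 ≤ n →
        relPow (relPow R q) m x y → relPow (relPow R q) n y x → x = y) :
    ∃ r : ℕ, 1 ≤ r ∧ ∀ x x' : X,
      Relation.ReflTransGen (fun a b => ∃ y, relPow R j a y ∧ relPow R j b y) x x' ↔
      Relation.EqvGen (relPow R r) x x' := by
  exact ⟨p * j, Nat.mul_pos hp hj,
    stmt13_general hDom hper (Nat.le_mul_of_pos_left j hp) (dvd_mul_right p j)⟩
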